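/- Let X and Y be locally compact Hausdorff spaces, let T : C₀(X,ℝ)⁺ → C₀(Y,ℝ)⁺ be a bijective isometry with inverse S = T⁻¹, and for x ∈ X let P_x = {f ∈ C₀(X,ℝ)⁺ : f ≠ 0 and f(x) = ‖f‖}, and for y ∈ Y let P_y = {u ∈ C₀(Y,ℝ)⁺ : u ≠ 0 and u(y) = ‖u‖}. For each y₀ ∈ Y there exists a unique x₀ ∈ X such that S(P_{y₀}) = P_{x₀} (equality of sets of functions). -/

import Mathlib

/-!
The argument recovers the peak sets from metric data.

*The isometry fixes `0`.* A nonzero `h` is a metric midpoint of `0` and `2h`, whereas `0` is never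
the midpoint of two nonzero nonnegative functions, since `‖a - b‖ ≤ max ‖a‖ ‖b‖` when `a, b ≥ 0`
(`map_zero_of_isometry`). Hence `T` and `S` preserve norms.

*Peak sets go into peak sets.* Finitely many `k` in `P_a` are dominated by their sum `h ∈ P_a`, in
the sense that `‖h - k‖ ≤ ‖h‖ - ‖k‖` (`exists_dominating`). This inequality survives a
norm-preserving isometry `U`, and it forces every point where `U h` attains its norm to be one where
`U k` does. So the compact sets on which the functions `U k` (`k ∈ P_a`) attain their norms have the
finite intersection property, and a common point `b` gives `U(P_a) ⊆ P_b` (`exists_image_peak_subset`).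

Applying this to `S` and then to `T` gives `S(P_{y₀}) ⊆ P_{x₀}` and `T(P_{x₀}) ⊆ P_{y₁}`, so
`P_{y₀} ⊆ P_{y₁}`. By Urysohn's lemma `P_a` determines `a`, so `y₁ = y₀` and equality holds.
-/

open scoped ZeroAtInfty

/-- The positive cone of `C₀(X, ℝ)`: all nonnegative functions. -/
def PosCone (X : Type*) [TopologicalSpace X] : Type _ :=
  {f : C₀(X, ℝ) // ∀ x, 0 ≤ f x}

namespace PosCone

variable {X : Type*} [TopologicalSpace X]

/-- The underlying `C₀` function of an element of the positive cone. -/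
noncomputable instance : CoeOut (PosCone X) C₀(X, ℝ) := ⟨Subtype.val⟩

/-- The zero function, as an element of the positive cone. -/
noncomputable instance : Zero (PosCone X) := ⟨⟨0, fun x => by simp⟩⟩

end PosCone

/-- The peak set `P_x`: all nonzero nonnegative functions attaining their norm at `x`. -/
def Peak {X : Type*} [TopologicalSpace X] (x : X) : Set (PosCone X) :=
  {f | (f : C₀(X, ℝ)) ≠ 0 ∧ (f : C₀(X, ℝ)) x = ‖(f : C₀(X, ℝ))‖}

/-- `M(f)`: the set of points where `f` attains its norm. -/
def MaxSet {X : Type*} [TopologicalSpace X] (f : C₀(X, ℝ)) : Set X :=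
  {x | f x = ‖f‖}

/-- The sum of finitely many elements of the positive cone. -/
noncomputable def sumCone {Y : Type*} [TopologicalSpace Y] {n : ℕ}
    (u : Fin n → PosCone Y) : PosCone Y :=
  ⟨∑ k, (u k : C₀(Y, ℝ)), fun y => by
    have h : (∑ k, (u k : C₀(Y, ℝ))) y = ∑ k, (u k : C₀(Y, ℝ)) y := by
      refine map_sum ((Pi.evalAddMonoidHom (fun _ : Y => ℝ) y).comp
        ⟨⟨fun f : C₀(Y, ℝ) => ⇑f, ZeroAtInftyContinuousMap.coe_zero⟩,
          ZeroAtInftyContinuousMap.coe_add⟩) _ _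
    rw [h]
    exact Finset.sum_nonneg fun k _ => (u k).2 y⟩

namespace PosCone

open Filter Topology

section Basic

variable {X : Type*} [TopologicalSpace X]

lemma apply_le_norm (f : C₀(X, ℝ)) (x : X) : |f x| ≤ ‖f‖ :=
  f.toBCF.norm_coe_le_norm x

lemma norm_le_of_forall {f : C₀(X, ℝ)} {C : ℝ} (hC : 0 ≤ C) (h : ∀ x, |f x| ≤ C) : ‖f‖ ≤ C :=
  (BoundedContinuousFunction.norm_le (f := f.toBCF) hC).2 h

lemma norm_sub_le_max (f g : PosCone X) : ‖f.1 - g.1‖ ≤ max ‖f.1‖ ‖g.1‖ := by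
  refine norm_le_of_forall (le_max_of_le_left (norm_nonneg _)) fun x => ?_
  have hf := (abs_le.1 (apply_le_norm f.1 x)).2
  have hg := (abs_le.1 (apply_le_norm g.1 x)).2
  have h1 := f.2 x
  have h2 := g.2 x
  have h3 := le_max_left ‖f.1‖ ‖g.1‖
  have h4 := le_max_right ‖f.1‖ ‖g.1‖
  rw [ZeroAtInftyContinuousMap.sub_apply, abs_le]
  constructor <;> linarith

/-- The pointwise sum in the positive cone. -/
noncomputable def add (f g : PosCone X) : PosCone X :=
  ⟨f.1 + g.1, fun x => add_nonneg (f.2 x) (g.2 x)⟩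

lemma maxSet_nonempty {f : PosCone X} (hf : f.1 ≠ 0) : (MaxSet f.1).Nonempty := by
  obtain ⟨x₀, hx₀⟩ : ∃ x, 0 < f.1 x := by
    by_contra! h
    exact hf (ZeroAtInftyContinuousMap.ext fun x => le_antisymm (h x) (f.2 x))
  have hev : ∀ᶠ x in cocompact X, f.1 x ≤ f.1 x₀ :=
    (f.1.zero_at_infty'.eventually (gt_mem_nhds hx₀)).mono fun x hx => le_of_lt hx
  obtain ⟨x, hx⟩ := f.1.continuous_toFun.exists_forall_ge' x₀ hev
  refine ⟨x, le_antisymm (abs_le.1 (apply_le_norm f.1 x)).2 ?_⟩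
  exact norm_le_of_forall (f.2 x) fun y => by rw [abs_of_nonneg (f.2 y)]; exact hx y

lemma isClosed_maxSet (f : C₀(X, ℝ)) : IsClosed (MaxSet f) :=
  isClosed_eq f.continuous_toFun continuous_const

lemma isCompact_maxSet {f : C₀(X, ℝ)} (hf : f ≠ 0) : IsCompact (MaxSet f) := by
  have hev : {x | f x < ‖f‖} ∈ cocompact X :=
    f.zero_at_infty'.eventually (gt_mem_nhds (norm_pos_iff.2 hf))
  obtain ⟨t, ht, hsub⟩ := mem_cocompact.1 hev
  refine ht.of_isClosed_subset (isClosed_maxSet f) fun x hx => ?_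
  by_contra hxt
  exact (hsub hxt : f x < ‖f‖).ne hx

lemma norm_add_of_peak {a : X} {f g : PosCone X} (hf : f ∈ Peak a) (hg : g ∈ Peak a) :
    ‖f.1 + g.1‖ = ‖f.1‖ + ‖g.1‖ := by
  refine le_antisymm (norm_add_le _ _) ?_
  have h := (abs_le.1 (apply_le_norm (f.1 + g.1) a)).2
  rwa [ZeroAtInftyContinuousMap.add_apply, hf.2, hg.2] at h

lemma add_mem_peak {a : X} {f g : PosCone X} (hf : f ∈ Peak a) (hg : g ∈ Peak a) :
    add f g ∈ Peak a := by
  have hn := norm_add_of_peak hf hg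
  refine ⟨?_, ?_⟩
  · have h1 := norm_pos_iff.2 hf.1
    have h2 := norm_nonneg g.1
    exact norm_pos_iff.1 (show 0 < ‖f.1 + g.1‖ by linarith)
  · change f.1 a + g.1 a = ‖f.1 + g.1‖
    rw [hn, hf.2, hg.2]

/-- For finitely many members of `P_a` there is `h ∈ P_a` (their sum) whose distance to each of them
is the least possible, namely the difference of the norms. The extra member `φ` covers empty `F`. -/
lemma exists_dominating {a : X} (φ : PosCone X) (hφ : φ ∈ Peak a) (F : Finset (Peak a)) :
    ∃ h ∈ Peak a, ‖h.1 - φ.1‖ ≤ ‖h.1‖ - ‖φ.1‖ ∧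
      ∀ k ∈ F, ‖h.1 - k.1.1‖ ≤ ‖h.1‖ - ‖k.1.1‖ := by
  classical
  induction F using Finset.induction_on with
  | empty => exact ⟨φ, hφ, by simp, by simp⟩
  | insert j F _ ih =>
    obtain ⟨h, hh, hhφ, hhF⟩ := ih
    have hn : ‖(add h j.1).1‖ = ‖h.1‖ + ‖j.1.1‖ := norm_add_of_peak hh j.2
    have key : ∀ k : PosCone X, ‖h.1 - k.1‖ ≤ ‖h.1‖ - ‖k.1‖ →
        ‖(add h j.1).1 - k.1‖ ≤ ‖(add h j.1).1‖ - ‖k.1‖ := fun k hk => by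
      have h1 : (add h j.1).1 - k.1 = (h.1 - k.1) + j.1.1 := add_sub_right_comm _ _ _
      have h2 := norm_add_le (h.1 - k.1) j.1.1
      rw [hn, h1]
      linarith
    refine ⟨add h j.1, add_mem_peak hh j.2, key φ hhφ, fun k hk => ?_⟩
    rcases Finset.mem_insert.1 hk with rfl | hk
    · have h1 : (add h k.1).1 - k.1.1 = h.1 := add_sub_cancel_right _ _
      rw [hn, h1]
      linarith
    · exact key k.1 (hhF k hk)

lemma exists_bump [LocallyCompactSpace X] [T2Space X] (a : X) {t : Set X} (ht : IsClosed t)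
    (hat : a ∉ t) : ∃ f ∈ Peak a, ∀ x ∈ t, f.1 x = 0 := by
  obtain ⟨f, hf1, hf0, hfc, hfI⟩ := exists_continuous_one_zero_of_isCompact
    (isCompact_singleton (x := a)) ht (Set.disjoint_singleton_left.2 hat)
  have hfa : f a = 1 := hf1 rfl
  let F : C₀(X, ℝ) := ⟨f, hfc.is_zero_at_infty⟩
  have hFa : F a = 1 := hfa
  have hnorm : ‖F‖ = 1 := by
    refine le_antisymm (norm_le_of_forall zero_le_one fun x => ?_) ?_
    · exact abs_le.2 ⟨by linarith [(hfI x).1, show F x = f x from rfl], (hfI x).2⟩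
    · simpa [hFa] using apply_le_norm F a
  refine ⟨⟨F, fun x => (hfI x).1⟩, ⟨?_, ?_⟩, fun x hx => hf0 hx⟩
  · exact norm_pos_iff.1 (show 0 < ‖F‖ by rw [hnorm]; exact one_pos)
  · exact hFa.trans hnorm.symm

lemma eq_of_peak_subset [LocallyCompactSpace X] [T2Space X] {a b : X}
    (h : (Peak a : Set (PosCone X)) ⊆ Peak b) : a = b := by
  by_contra hab
  obtain ⟨f, hfa, hf0⟩ := exists_bump a (isClosed_singleton (x := b)) hab
  have h1 := (h hfa).2
  rw [hf0 b rfl] at h1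
  exact hfa.1 (norm_eq_zero.1 h1.symm)

end Basic

section Isometry

variable {A B : Type*} [TopologicalSpace A] [TopologicalSpace B]

/-- `T 0` is a metric midpoint of `0` and `2 • T 0`; pulled back along `T` this would make `0` a
midpoint of two elements of the cone at distance `2 * ‖T 0‖`, which forces `‖T 0‖ = 0`. -/
lemma map_zero_of_isometry (T : PosCone A → PosCone B)
    (hiso : ∀ f g : PosCone A, ‖(T f).1 - (T g).1‖ = ‖f.1 - g.1‖)
    (hsurj : Function.Surjective T) : (T 0).1 = 0 := by
  obtain ⟨a, ha⟩ := hsurj (add (T 0) (T 0))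
  obtain ⟨b, hb⟩ := hsurj 0
  have z : (0 : PosCone A).1 = 0 := rfl
  have z' : (0 : PosCone B).1 = 0 := rfl
  have e : (add (T 0) (T 0)).1 = (2 : ℝ) • (T 0).1 := (two_smul ℝ _).symm
  have h1 : ‖a.1‖ = ‖(T 0).1‖ := by
    have := hiso a 0
    rw [ha, z, sub_zero, show (add (T 0) (T 0)).1 - (T 0).1 = (T 0).1 from
      add_sub_cancel_right _ _] at this
    exact this.symm
  have h2 : ‖b.1‖ = ‖(T 0).1‖ := by
    have := hiso b 0
    rw [hb, z, z', sub_zero, zero_sub, norm_neg] at this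
    exact this.symm
  have h3 : ‖a.1 - b.1‖ = 2 * ‖(T 0).1‖ := by
    rw [← hiso a b, ha, hb, z', sub_zero, e, norm_smul]
    norm_num
  have h4 := norm_sub_le_max a b
  rw [h1, h2, h3, max_self] at h4
  exact norm_eq_zero.1 (le_antisymm (by linarith) (norm_nonneg _))

/-- Compactness argument: the sets `MaxSet (U k)`, `k ∈ P_a`, are compact and have the finite
intersection property, because `MaxSet (U h)` lies in each of finitely many of them when `h`
dominates the corresponding `k`. -/
lemma exists_image_peak_subset [LocallyCompactSpace A] [T2Space A]
    (U : PosCone A → PosCone B)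
    (hiso : ∀ f g : PosCone A, ‖(U f).1 - (U g).1‖ = ‖f.1 - g.1‖)
    (h0 : (U 0).1 = 0) (a : A) : ∃ b : B, U '' Peak a ⊆ Peak b := by
  have hnorm : ∀ f, ‖(U f).1‖ = ‖f.1‖ := fun f => by
    have := hiso f 0
    rwa [h0, sub_zero, show (0 : PosCone A).1 = 0 from rfl, sub_zero] at this
  have hne : ∀ f ∈ Peak a, (U f).1 ≠ 0 := fun f hf => by
    rw [← norm_pos_iff, hnorm]
    exact norm_pos_iff.2 hf.1
  obtain ⟨φ, hφ, -⟩ := exists_bump a isClosed_empty (Set.notMem_empty a)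
  obtain ⟨b, -, hb⟩ := (isCompact_maxSet (hne φ hφ)).inter_iInter_nonempty
    (fun k : Peak a => MaxSet (U k.1).1) (fun k => isClosed_maxSet _) (fun F => by
      obtain ⟨h, hh, hhφ, hhF⟩ := exists_dominating φ hφ F
      obtain ⟨b, hb⟩ := maxSet_nonempty (hne h hh)
      have key : ∀ k : PosCone A, ‖h.1 - k.1‖ ≤ ‖h.1‖ - ‖k.1‖ → b ∈ MaxSet (U k).1 :=
          fun k hk => by
        rw [← hiso, ← hnorm h, ← hnorm k] at hk
        have h1 := (abs_le.1 (apply_le_norm ((U h).1 - (U k).1) b)).2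
        have h2 := (abs_le.1 (apply_le_norm (U k).1 b)).2
        rw [ZeroAtInftyContinuousMap.sub_apply, show (U h).1 b = ‖(U h).1‖ from hb] at h1
        exact le_antisymm h2 (by linarith)
      exact ⟨b, key φ hhφ, Set.mem_iInter₂.2 fun k hk => key k.1 (hhF k hk)⟩)
  refine ⟨b, ?_⟩
  rintro _ ⟨f, hf, rfl⟩
  exact ⟨hne f hf, Set.mem_iInter.1 hb ⟨f, hf⟩⟩

end Isometry

end PosCone

theorem lem_2_8 {X Y : Type*}
    [TopologicalSpace X] [LocallyCompactSpace X] [T2Space X]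
    [TopologicalSpace Y] [LocallyCompactSpace Y] [T2Space Y]
    (T : PosCone X → PosCone Y)
    (hiso : ∀ f g : PosCone X,
      ‖(T f : C₀(Y, ℝ)) - (T g : C₀(Y, ℝ))‖ = ‖(f : C₀(X, ℝ)) - (g : C₀(X, ℝ))‖)
    (hbij : Function.Bijective T)
    (S : PosCone Y → PosCone X)
    (hTS : Function.LeftInverse S T) (hST : Function.RightInverse S T)
    (y₀ : Y) :
    ∃! x₀ : X, S '' Peak y₀ = Peak x₀ := by
  have hT0 := PosCone.map_zero_of_isometry T hiso hbij.surjective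
  have hS0 : (S 0 : C₀(X, ℝ)) = 0 := by
    have h : T 0 = 0 := Subtype.ext hT0
    rw [← h, hTS]
    rfl
  have hisoS : ∀ f g : PosCone Y, ‖(S f).1 - (S g).1‖ = ‖f.1 - g.1‖ := fun f g => by
    rw [← hiso, hST, hST]
  obtain ⟨x₀, hx₀⟩ := PosCone.exists_image_peak_subset S hisoS hS0 y₀
  obtain ⟨y₁, hy₁⟩ := PosCone.exists_image_peak_subset T hiso hT0 x₀
  have hy : y₀ = y₁ := PosCone.eq_of_peak_subset fun u hu =>
    hST u ▸ hy₁ ⟨S u, hx₀ ⟨u, hu, rfl⟩, rfl⟩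
  subst hy
  have heq : S '' Peak y₀ = Peak x₀ :=
    hx₀.antisymm fun f hf => ⟨T f, hy₁ ⟨f, hf, rfl⟩, hTS f⟩
  exact ⟨x₀, heq, fun x hx => PosCone.eq_of_peak_subset (hx.symm.trans heq).subset⟩
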